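/- D^Δ_{I,J} = { udv^{−1} : (d,v,u) is an admissible triple for (λ,μ) with d ∈ D^Δ_{B,A} }. -/

import Mathlib

/-!
Every element that occurs lies in the symmetric group `W_Δ`, where the claim becomes a statement
about orders: for `1 ≤ i < r`, the root `αᵢ·d` is positive exactly when `d⁻¹ i < d⁻¹ (i+1)`
(`mem_DD_iff`), and elements of `W_A` preserve the two blocks `{1,…,a}` and `{a+1,…,r}`
(`wpar_le`).  Only the inclusions `J ⊆ A` and `I ⊆ B` matter, not the shape of `J` and `I`.

*Existence of the factorization.*  The statistic `F d = ∑ i · d(i)` is invariant under inversion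
and grows by `d(i) − d(i+1)` when `d` is replaced by `d sᵢ`.  Hence an element maximizing `F` in
the double coset `W_B c W_A` lies in `D_{B,A}`, and writing `c = x d y` one may replace `y` by an
element of `W_K y` maximizing `F`, where `K = B·d ∩ A`: the factor from `W_K` moves across `d`
into `W_B` because `d W_K d⁻¹ ⊆ W_B`.

*Comparison of the conditions.*  The heart is `interval_run`, a form of Kilmoyer's theorem: if
`p < q` lie in one `A`-block and `d p`, `d q` lie in one `B`-block, then `d` maps the interval
`[p,q]` onto `[d p, d q]` by a translation, so that all `α_t` with `p ≤ t < q` lie in `K`.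
Consequently `d v⁻¹` preserves the positivity of roots of `B` (`vd_mono`), which gives
`u ∈ D_I ↔ c ∈ D_I` for `c = u d v⁻¹` (`left_iff`), and the condition `c⁻¹ ∈ D_J` splits into
`v ∈ D_J` and `u⁻¹ ∈ D_{B ∩ J v d⁻¹}` (`right_iff`).
-/

/- The hyperoctahedral group `W_r` (the Weyl group of type `B_r`), realized as the group
of permutations `w` of `{±1, …, ±r}` satisfying `(−i)w = −(iw)`.  We realize its elements
inside `Equiv.Perm ℤ`, letting `w` act on `i` on the *right* via `i·w := w⁻¹ i` (so that
`i·(wd) = (i·w)·d` and products of group elements can be written in the same order as in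
the paper). -/

namespace QQS

abbrev G : Type := Equiv.Perm ℤ

/-- The generators `s₀ = (1,−1)` and `sᵢ = (i,i+1)(−i,−i−1)`. -/
def s (i : ℕ) : G :=
  if i = 0 then Equiv.swap 1 (-1)
  else Equiv.swap (i : ℤ) ((i : ℤ) + 1) * Equiv.swap (-(i : ℤ)) (-((i : ℤ) + 1))

/-- The generating set `{s₀, s₁, …, s_{r−1}}` of `W_r`. -/
def gens (r : ℕ) : Set G := {x | ∃ i, i < r ∧ x = s i}

/-- Membership in `W_r`: permutations of `{±1, …, ±r}` commuting with negation. -/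
def inW (r : ℕ) (w : G) : Prop :=
  (∀ i : ℤ, w (-i) = -(w i)) ∧ ∀ i : ℤ, (r : ℤ) < |i| → w i = i

/-- The length `ℓ(w)` of `w ∈ W_r` with respect to the generators `s₀, …, s_{r−1}`. -/
noncomputable def len (r : ℕ) (w : G) : ℕ :=
  sInf {n | ∃ l : List G, l.length = n ∧ (∀ x ∈ l, x ∈ gens r) ∧ l.prod = w}

/-- The partial sum of the first `k` parts of a composition. -/
def psum (l : List ℕ) (k : ℕ) : ℕ := (l.take k).sum

end QQS
namespace QQS

/- The root system of type `B_r`.  `W_r` acts on the vector space `V` with basis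
`e₁, …, e_r`; we realize a vector `x = ∑ xᵢ eᵢ ∈ V` as the odd function `ℤ → ℚ` with
value `xᵢ` at `i` and `−xᵢ` at `−i`.  The (right) action of `w` on `V` determined by
`eᵢ·w = e_{i·w}` if `i·w > 0` and `eᵢ·w = −e_{−(i·w)}` if `i·w < 0` then becomes
`x·w = x ∘ w`. -/

/-- The basis vector `eᵢ`, as an odd function `ℤ → ℚ`. -/
def evec (i : ℕ) : ℤ → ℚ := fun j => if j = (i : ℤ) then 1 else if j = -(i : ℤ) then -1 else 0

/-- The simple roots: `α₀ = e₁` and `αᵢ = e_{i+1} − eᵢ` for `i ≥ 1`. -/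
def sroot : ℕ → (ℤ → ℚ)
  | 0 => evec 1
  | i + 1 => evec (i + 2) - evec (i + 1)

/-- `Δ₀ = {α₀, α₁, …, α_{r−1}}`. -/
def Delta0 (r : ℕ) : Set (ℤ → ℚ) := {x | ∃ i, i < r ∧ x = sroot i}

/-- `Δ = Δ₀ ∖ {α₀}`. -/
def DeltaS (r : ℕ) : Set (ℤ → ℚ) := Delta0 r \ {sroot 0}

/-- The right action of `w ∈ W_r` on `V`: `x·w = x ∘ w`. -/
def rAct (w : G) (x : ℤ → ℚ) : ℤ → ℚ := fun j => x (w j)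

/-- `x` is a positive root: `eᵢ`, `eᵢ + eⱼ` or `eⱼ − eᵢ` with `1 ≤ i < j ≤ r`. -/
def isPos (r : ℕ) (x : ℤ → ℚ) : Prop :=
  (∃ i, 1 ≤ i ∧ i ≤ r ∧ x = evec i) ∨
  (∃ i j, 1 ≤ i ∧ i < j ∧ j ≤ r ∧ (x = evec i + evec j ∨ x = evec j - evec i))

/-- `D_K = {d ∈ W_r : α·d is a positive root for every α ∈ K}`. -/
def DD (r : ℕ) (K : Set (ℤ → ℚ)) : Set G :=
  {d | inW r d ∧ ∀ α ∈ K, isPos r (rAct d α)}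

/-- `D_{K,L} = D_K ∩ D_L⁻¹`. -/
def DDd (r : ℕ) (K L : Set (ℤ → ℚ)) : Set G := {d | d ∈ DD r K ∧ d⁻¹ ∈ DD r L}

/-- For `M ⊆ Δ₀`, the parabolic subgroup `W_M`, generated by the reflections `s_α`
for `α ∈ M` (the reflection in the hyperplane orthogonal to `αᵢ` is `sᵢ`). -/
def Wpar (r : ℕ) (M : Set (ℤ → ℚ)) : Subgroup G :=
  Subgroup.closure {w | ∃ i, i < r ∧ sroot i ∈ M ∧ w = s i}

/-- `D^M_{K,L} = D_K ∩ D_L⁻¹ ∩ W_M`. -/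
def DDm (r : ℕ) (K L M : Set (ℤ → ℚ)) : Set G := {d | d ∈ DDd r K L ∧ d ∈ Wpar r M}

end QQS
namespace QQS

/- Fix an `a`-bicomposition `λ = (l1, l2)` and a `b`-bicomposition `μ = (m1, m2)` in
`Λ(n,r)`.  The sets of simple roots `J, I ⊆ Δ`, and `Ã, B̃, A, B ⊆ Δ₀`. -/

/-- `j` is a partial sum of the composition `l`. -/
def isPartialSum (l : List ℕ) (j : ℕ) : Prop := ∃ k, psum l k = j

/-- `{α_{off+j} : 1 ≤ j ≤ l.sum − 1, j not a partial sum of l}`. -/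
def compRoots (off : ℕ) (l : List ℕ) : Set (ℤ → ℚ) :=
  {x | ∃ j, 1 ≤ j ∧ j + 1 ≤ l.sum ∧ ¬ isPartialSum l j ∧ x = sroot (off + j)}

/-- `J = J₁ ∪ J₂ ⊆ Δ` associated to the bicomposition `(l1, l2)`. -/
def Jset (l1 l2 : List ℕ) : Set (ℤ → ℚ) := compRoots 0 l1 ∪ compRoots l1.sum l2

/-- `Ã = Δ₀ ∖ {α_a}` if `a ≠ r`, and `Ã = Δ₀` if `a = r`. -/
def Atil (r a : ℕ) : Set (ℤ → ℚ) := if a = r then Delta0 r else Delta0 r \ {sroot a}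

/-- `A = Ã ∖ {α₀}`. -/
def Aset (r a : ℕ) : Set (ℤ → ℚ) := Atil r a \ {sroot 0}

/-- An admissible triple `(d, v, u)` for `(λ, μ)`: `d ∈ D_{B̃,Ã}`,
`v ∈ D^A_{J, B·d ∩ A}` and `u ∈ D^B_{I, B ∩ J·v·d⁻¹}`. -/
def Admissible (r a b : ℕ) (l1 l2 m1 m2 : List ℕ) (d v u : G) : Prop :=
  d ∈ DDd r (Atil r b) (Atil r a) ∧
  v ∈ DDm r (Jset l1 l2) ((rAct d '' Aset r b) ∩ Aset r a) (Aset r a) ∧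
  u ∈ DDm r (Jset m1 m2) (Aset r b ∩ (rAct d⁻¹ '' (rAct v '' Jset l1 l2))) (Aset r b)

end QQS
namespace QQS

/-! ### Roots as odd functions -/

/-- The vector `e_i` with an integer index, so that `e_{−i} = −e_i` for `i ≠ 0`. -/
def E (i : ℤ) : ℤ → ℚ := fun j => if j = i then 1 else if j = -i then -1 else 0

lemma sroot_eq {i : ℕ} (hi : 1 ≤ i) : sroot i = E (i + 1) - E i := by
  obtain ⟨k, rfl⟩ := Nat.exists_eq_add_of_le' hi
  have : ((k + 1 : ℕ) : ℤ) + 1 = ((k + 2 : ℕ) : ℤ) := by push_cast; ring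
  rw [this]; rfl

lemma E_pos_apply {i j : ℤ} (hi : 0 < i) (hj : 0 < j) : E i j = if j = i then 1 else 0 := by
  have : j ≠ -i := by omega
  simp [E, this]

lemma E_sub_inj {p q p' q' : ℤ} (hp : 0 < p) (hq : 0 < q) (hp' : 0 < p') (hq' : 0 < q')
    (hpq : p ≠ q) (h : E p - E q = E p' - E q') : p = p' ∧ q = q' := by
  have h1 := congrFun h p
  have h2 := congrFun h q
  simp only [Pi.sub_apply, E_pos_apply, hp, hq, hp', hq'] at h1 h2
  constructor
  · by_contra hne
    simp only [hne, hpq, if_true, if_false] at h1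
    split_ifs at h1 <;> norm_num at h1
  · by_contra hne
    simp only [hne, hpq.symm, if_true, if_false] at h2
    split_ifs at h2 <;> norm_num at h2

lemma isPos_sub_iff {r : ℕ} {p q : ℤ} (hp : 0 < p) (hq : 0 < q) (hpr : p ≤ r)
    (hpq : p ≠ q) : isPos r (E p - E q) ↔ q < p := by
  constructor
  · rintro (⟨i, hi, -, h⟩ | ⟨i, j, hi, hij, -, h | h⟩)
    · have h2 := congrFun h q
      change _ = E i q at h2
      have : (0 : ℤ) < i := by omega
      simp only [Pi.sub_apply, E_pos_apply, hp, hq, this, hpq.symm, if_true, if_false] at h2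
      split_ifs at h2 <;> norm_num at h2
    · have h2 := congrFun h q
      change _ = E i q + E j q at h2
      have h3 : (0 : ℤ) < i := by omega
      have h4 : (0 : ℤ) < j := by omega
      simp only [Pi.sub_apply, E_pos_apply, hp, hq, h3, h4, hpq.symm, if_true, if_false] at h2
      split_ifs at h2 <;> norm_num at h2
    · have := E_sub_inj hp hq (p' := j) (q' := i) (by omega) (by omega) hpq h
      omega
  · intro h
    refine Or.inr ⟨q.toNat, p.toNat, by omega, by omega, by omega, Or.inr ?_⟩
    change _ = E (p.toNat : ℤ) - E (q.toNat : ℤ)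
    rw [Int.toNat_of_nonneg hp.le, Int.toNat_of_nonneg hq.le]

lemma sroot_inj {i j : ℕ} (h : sroot i = sroot j) : i = j := by
  have key : ∀ {k l : ℕ}, 1 ≤ k → sroot k = sroot l → k = l := by
    intro k l hk h
    rw [sroot_eq hk] at h
    rcases Nat.eq_zero_or_pos l with rfl | hl
    · have h2 := congrFun h k
      change _ = E 1 k at h2
      have h3 : (0 : ℤ) < k := by omega
      have h4 : (0 : ℤ) < k + 1 := by omega
      simp only [Pi.sub_apply, E_pos_apply, h3, h4, zero_lt_one] at h2
      split_ifs at h2 <;> first | omega | norm_num at h2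
    · rw [sroot_eq hl] at h
      have := E_sub_inj (by omega) (by omega) (by omega) (by omega) (by omega) h
      omega
  rcases Nat.eq_zero_or_pos i with rfl | hi
  · rcases Nat.eq_zero_or_pos j with rfl | hj
    · rfl
    · exact (key hj h.symm).symm
  · exact key hi h

lemma mem_DeltaS {r : ℕ} {x : ℤ → ℚ} : x ∈ DeltaS r ↔ ∃ i, 1 ≤ i ∧ i < r ∧ x = sroot i := by
  constructor
  · rintro ⟨⟨i, hi, rfl⟩, h⟩
    refine ⟨i, ?_, hi, rfl⟩
    by_contra h0
    exact h (by rw [show i = 0 by omega]; rfl)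
  · rintro ⟨i, h1, h2, rfl⟩
    exact ⟨⟨i, h2, rfl⟩, fun h => by have := sroot_inj h; omega⟩

lemma sroot_mem_DeltaS {r i : ℕ} : sroot i ∈ DeltaS r ↔ 1 ≤ i ∧ i < r := by
  rw [mem_DeltaS]
  constructor
  · rintro ⟨j, h1, h2, h⟩
    rw [sroot_inj h]; exact ⟨h1, h2⟩
  · rintro ⟨h1, h2⟩; exact ⟨i, h1, h2, rfl⟩

lemma mem_Aset {r a : ℕ} {x : ℤ → ℚ} : x ∈ Aset r a ↔ x ∈ DeltaS r ∧ x ≠ sroot a := by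
  unfold Aset Atil DeltaS
  split_ifs with h
  · subst h
    constructor
    · intro hx
      refine ⟨hx, ?_⟩
      rintro rfl
      obtain ⟨i, hi, h⟩ := hx.1
      have := sroot_inj h
      omega
    · exact fun hx => hx.1
  · simp only [Set.mem_sdiff, Set.mem_singleton_iff]
    tauto

lemma sroot_mem_Aset {r a i : ℕ} : sroot i ∈ Aset r a ↔ 1 ≤ i ∧ i < r ∧ i ≠ a := by
  rw [mem_Aset, sroot_mem_DeltaS, and_assoc]
  have : sroot i ≠ sroot a ↔ i ≠ a :=
    ⟨fun h h' => h (by rw [h']), fun h h' => h (sroot_inj h')⟩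
  rw [this]

lemma Aset_sub {r a : ℕ} : Aset r a ⊆ DeltaS r := fun _ hx => (mem_Aset.1 hx).1

/-! ### The symmetric group inside `W_r` -/

lemma apply_inv_cancel (w : G) (i : ℤ) : w (w⁻¹ i) = i := w.apply_symm_apply i

lemma inv_apply_cancel (w : G) (i : ℤ) : w⁻¹ (w i) = i := w.symm_apply_apply i

/-- Membership in the symmetric group: elements of `W_r` that preserve positive integers. -/
def Sym (r : ℕ) (w : G) : Prop := inW r w ∧ ∀ i, 0 < i → 0 < w i

namespace Sym

variable {r : ℕ} {w w' : G}

lemma map_zero (h : Sym r w) : w 0 = 0 := by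
  have := h.1.1 0
  simp only [neg_zero] at this; omega

lemma range (h : Sym r w) {i : ℤ} (h0 : 0 < i) (h1 : i ≤ r) : 0 < w i ∧ w i ≤ r := by
  refine ⟨h.2 i h0, ?_⟩
  by_contra hc
  have h2 := h.1.2 (w i) (by rw [abs_of_pos (h.2 i h0)]; omega)
  have := w.injective h2
  omega

lemma one : Sym r (1 : G) := ⟨⟨fun _ => rfl, fun _ _ => rfl⟩, fun _ h => h⟩

lemma mul (h : Sym r w) (h' : Sym r w') : Sym r (w * w') := by
  refine ⟨⟨fun i => ?_, fun i hi => ?_⟩, fun i hi => h.2 _ (h'.2 _ hi)⟩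
  · simp only [Equiv.Perm.mul_apply, h'.1.1, h.1.1]
  · simp only [Equiv.Perm.mul_apply, h'.1.2 i hi, h.1.2 i hi]

lemma inv (h : Sym r w) : Sym r w⁻¹ := by
  refine ⟨⟨fun i => ?_, fun i hi => ?_⟩, fun i hi => ?_⟩
  · rw [Equiv.Perm.inv_eq_iff_eq, h.1.1, apply_inv_cancel]
  · rw [Equiv.Perm.inv_eq_iff_eq, h.1.2 i hi]
  · by_contra hc
    have h1 : w (w⁻¹ i) = i := apply_inv_cancel _ _
    rcases eq_or_lt_of_le (not_lt.1 hc) with h2 | h2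
    · rw [h2, h.map_zero] at h1; omega
    · have h3 := h.2 (-(w⁻¹ i)) (by omega)
      rw [h.1.1, h1] at h3; omega

end Sym

lemma s_apply {i : ℕ} (hi : 1 ≤ i) (j : ℤ) : s i j =
    if j = i then (i : ℤ) + 1 else if j = i + 1 then (i : ℤ) else
    if j = -i then -((i : ℤ) + 1) else if j = -(i + 1) then -(i : ℤ) else j := by
  have h0 : i ≠ 0 := by omega
  simp only [s, h0, if_false, Equiv.Perm.mul_apply, Equiv.swap_apply_def]
  split_ifs <;> omega

lemma sym_s {r i : ℕ} (hi : 1 ≤ i) (hir : i < r) : Sym r (s i) := by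
  refine ⟨⟨fun j => ?_, fun j hj => ?_⟩, fun j hj => ?_⟩
  · simp only [s_apply hi]; split_ifs <;> omega
  · simp only [s_apply hi]
    rcases abs_cases j with h | h <;> split_ifs <;> omega
  · simp only [s_apply hi]; split_ifs <;> omega

lemma s_mul_self {i : ℕ} (hi : 1 ≤ i) : s i * s i = 1 := by
  ext j
  simp only [Equiv.Perm.mul_apply, Equiv.Perm.one_apply]
  rw [s_apply hi (s i j), s_apply hi j]
  split_ifs <;> omega

lemma wpar_mono {r : ℕ} {M N : Set (ℤ → ℚ)} (h : M ⊆ N) : Wpar r M ≤ Wpar r N :=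
  Subgroup.closure_mono (by rintro w ⟨i, h1, h2, h3⟩; exact ⟨i, h1, h h2, h3⟩)

lemma s_mem_wpar {r i : ℕ} {M : Set (ℤ → ℚ)} (hM : M ⊆ DeltaS r) (h : sroot i ∈ M) :
    s i ∈ Wpar r M :=
  Subgroup.subset_closure ⟨i, (sroot_mem_DeltaS.1 (hM h)).2, h, rfl⟩

lemma sym_of_wpar {r : ℕ} {w : G} (h : w ∈ Wpar r (DeltaS r)) : Sym r w := by
  induction h using Subgroup.closure_induction with
  | mem x hx =>
    obtain ⟨i, h1, h2, rfl⟩ := hx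
    exact sym_s (sroot_mem_DeltaS.1 h2).1 h1
  | one => exact Sym.one
  | mul x y _ _ hx hy => exact hx.mul hy
  | inv x _ hx => exact hx.inv

/-- Elements of `W_A` preserve the blocks `{1,…,a}` and `{a+1,…,r}`. -/
lemma wpar_le {r a : ℕ} {w : G} (h : w ∈ Wpar r (Aset r a)) :
    ∀ i : ℤ, 0 < i → (w i ≤ a ↔ i ≤ a) := by
  have hs : Sym r w ∧ ∀ i : ℤ, 0 < i → (w i ≤ a ↔ i ≤ a) := by
    induction h using Subgroup.closure_induction with
    | mem x hx =>
      obtain ⟨i, h1, h2, rfl⟩ := hx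
      have h3 := sroot_mem_Aset.1 h2
      refine ⟨sym_s h3.1 h1, fun j hj => ?_⟩
      rw [s_apply h3.1]
      split_ifs <;> omega
    | one => exact ⟨Sym.one, fun _ _ => Iff.rfl⟩
    | mul x y _ _ hx hy =>
      exact ⟨hx.1.mul hy.1, fun i hi => (hx.2 _ (hy.1.2 i hi)).trans (hy.2 i hi)⟩
    | inv x _ hx =>
      refine ⟨hx.1.inv, fun i hi => ?_⟩
      have := hx.2 (x⁻¹ i) (hx.1.inv.2 i hi)
      rw [apply_inv_cancel] at this
      exact this.symm
  exact hs.2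

lemma rAct_E {r : ℕ} {w : G} (h : Sym r w) (i : ℤ) : rAct w (E i) = E (w⁻¹ i) := by
  funext j
  have h1 : w j = i ↔ j = w⁻¹ i := by rw [eq_comm (a := j), Equiv.Perm.inv_eq_iff_eq, eq_comm]
  have h2 : w j = -i ↔ j = -(w⁻¹ i) := by
    rw [← h.inv.1.1, eq_comm (a := j), Equiv.Perm.inv_eq_iff_eq, eq_comm]
  simp only [rAct, E, h1, h2]

lemma rAct_sroot {r : ℕ} {w : G} (h : Sym r w) {i : ℕ} (hi : 1 ≤ i) :
    rAct w (sroot i) = E (w⁻¹ (i + 1)) - E (w⁻¹ i) := by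
  rw [sroot_eq hi, ← rAct_E h, ← rAct_E h]; rfl

lemma mem_DD_iff {r : ℕ} {K : Set (ℤ → ℚ)} (hK : K ⊆ DeltaS r) {d : G} (hd : Sym r d) :
    d ∈ DD r K ↔ ∀ i : ℕ, sroot i ∈ K → d⁻¹ i < d⁻¹ (i + 1) := by
  have key : ∀ i : ℕ, sroot i ∈ K →
      (isPos r (rAct d (sroot i)) ↔ d⁻¹ (i : ℤ) < d⁻¹ ((i : ℤ) + 1)) := by
    intro i hi
    have h := sroot_mem_DeltaS.1 (hK hi)
    rw [rAct_sroot hd h.1]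
    have h1 := hd.inv.range (i := i) (by omega) (by omega)
    have h2 := hd.inv.range (i := i + 1) (by omega) (by omega)
    refine isPos_sub_iff h2.1 h1.1 h2.2 fun h => ?_
    have := d⁻¹.injective h
    omega
  constructor
  · exact fun h i hi => (key i hi).1 (h.2 _ hi)
  · refine fun h => ⟨hd.1, fun α hα => ?_⟩
    obtain ⟨i, -, -, rfl⟩ := mem_DeltaS.1 (hK hα)
    exact (key i hα).2 (h i hα)

/-- For an element of the symmetric group the positivity of `α₀·d` is automatic. -/
lemma mem_DD_Atil {r a : ℕ} {d : G} (hd : Sym r d) (h : d ∈ DD r (Aset r a)) :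
    d ∈ DD r (Atil r a) := by
  refine ⟨hd.1, fun α hα => ?_⟩
  by_cases h0 : α = sroot 0
  · have hr : 0 < r := by
      have : α ∈ Delta0 r := by
        unfold Atil at hα
        split_ifs at hα
        · exact hα
        · exact hα.1
      obtain ⟨i, hi, -⟩ := this
      omega
    have h1 := hd.inv.range (i := 1) (by omega) (by omega)
    refine Or.inl ⟨(d⁻¹ 1).toNat, by omega, by omega, ?_⟩
    rw [h0]
    change rAct d (E 1) = E _
    rw [rAct_E hd, Int.toNat_of_nonneg h1.1.le]
  · exact h.2 α ⟨hα, h0⟩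

lemma mem_K_iff {r a b : ℕ} {d : G} (hd : Sym r d) {i : ℕ} :
    sroot i ∈ (rAct d '' Aset r b) ∩ Aset r a ↔
      (1 ≤ i ∧ i < r ∧ i ≠ a) ∧
        ∃ j : ℕ, (1 ≤ j ∧ j < r ∧ j ≠ b) ∧ d i = j ∧ d (i + 1) = j + 1 := by
  rw [Set.mem_inter_iff, sroot_mem_Aset, and_comm]
  refine and_congr_right fun hi => ?_
  constructor
  · rintro ⟨x, hx, h⟩
    obtain ⟨j, -, -, rfl⟩ := mem_DeltaS.1 (Aset_sub hx)
    have hj := sroot_mem_Aset.1 hx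
    rw [rAct_sroot hd hj.1, sroot_eq hi.1] at h
    have h1 := hd.inv.range (i := j) (by omega) (by omega)
    have h2 := hd.inv.range (i := j + 1) (by omega) (by omega)
    have h3 := E_sub_inj h2.1 h1.1 (by omega) (by omega)
      (fun h => by have := d⁻¹.injective h; omega) h
    exact ⟨j, hj, by rw [← h3.2, apply_inv_cancel],
      by rw [← h3.1, apply_inv_cancel]⟩
  · rintro ⟨j, hj, h1, h2⟩
    refine ⟨sroot j, sroot_mem_Aset.2 hj, ?_⟩
    rw [rAct_sroot hd hj.1, ← h2, ← h1, inv_apply_cancel, inv_apply_cancel,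
      sroot_eq hi.1]

lemma mem_K2_iff {r a b : ℕ} {J : Set (ℤ → ℚ)} (hJ : J ⊆ Aset r a) {d v : G} (hd : Sym r d)
    (hv : Sym r v) {j : ℕ} :
    sroot j ∈ Aset r b ∩ (rAct d⁻¹ '' (rAct v '' J)) ↔
      (1 ≤ j ∧ j < r ∧ j ≠ b) ∧
        ∃ i : ℕ, sroot i ∈ J ∧ d (v⁻¹ i) = j ∧ d (v⁻¹ (i + 1)) = j + 1 := by
  rw [Set.mem_inter_iff, sroot_mem_Aset]
  refine and_congr_right fun hj => ?_
  have hvd : Sym r (v * d⁻¹) := hv.mul hd.inv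
  have hcomp : ∀ x, rAct d⁻¹ (rAct v x) = rAct (v * d⁻¹) x := fun x => rfl
  have happ : ∀ x, (v * d⁻¹)⁻¹ x = d (v⁻¹ x) := fun x => by
    rw [mul_inv_rev, inv_inv]; rfl
  constructor
  · rintro ⟨_, ⟨x, hx, rfl⟩, h⟩
    obtain ⟨i, -, -, rfl⟩ := mem_DeltaS.1 (Aset_sub (hJ hx))
    have hi := sroot_mem_Aset.1 (hJ hx)
    rw [hcomp, rAct_sroot hvd hi.1, sroot_eq hj.1] at h
    have h1 := hvd.inv.range (i := i) (by omega) (by omega)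
    have h2 := hvd.inv.range (i := i + 1) (by omega) (by omega)
    have h3 := E_sub_inj h2.1 h1.1 (by omega) (by omega)
      (fun h => by have := (v * d⁻¹)⁻¹.injective h; omega) h
    rw [happ, happ] at h3
    exact ⟨i, hx, h3.2, h3.1⟩
  · rintro ⟨i, hx, h1, h2⟩
    have hi := sroot_mem_Aset.1 (hJ hx)
    refine ⟨_, ⟨_, hx, rfl⟩, ?_⟩
    rw [hcomp, rAct_sroot hvd hi.1, happ, happ, h1, h2, sroot_eq hj.1]

/-! ### Extremal coset representatives -/

/-- The statistic `∑ i · w(i)` over `1 ≤ i ≤ r`, which decreases along the weak orders. -/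
noncomputable def F (r : ℕ) (w : G) : ℤ := ∑ i ∈ Finset.Icc (1 : ℤ) r, i * w i

lemma F_mul_s {r i : ℕ} (hi : 1 ≤ i) (hir : i < r) (w : G) :
    F r (w * s i) = F r w + (w i - w (i + 1)) := by
  have h : F r (w * s i) - F r w = w i - w (i + 1) := by
    unfold F
    rw [← Finset.sum_sub_distrib]
    rw [Finset.sum_eq_add (i : ℤ) ((i : ℤ) + 1) (by omega)]
    · have h1 : s i (i : ℤ) = i + 1 := by rw [s_apply hi]; simp
      have h2 : s i ((i : ℤ) + 1) = i := by rw [s_apply hi]; simp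
      simp only [Equiv.Perm.mul_apply, h1, h2]
      ring
    · rintro j hj ⟨h1, h2⟩
      have h3 : s i j = j := by
        rw [Finset.mem_Icc] at hj
        rw [s_apply hi]; split_ifs <;> omega
      simp only [Equiv.Perm.mul_apply, h3, sub_self]
    · intro h; exact absurd (Finset.mem_Icc.2 ⟨by omega, by omega⟩) h
    · intro h; exact absurd (Finset.mem_Icc.2 ⟨by omega, by omega⟩) h
  linarith

lemma F_inv {r : ℕ} {w : G} (h : Sym r w) : F r w⁻¹ = F r w := by
  unfold F
  refine Finset.sum_nbij' (fun i => w⁻¹ i) (fun i => w i) ?_ ?_ ?_ ?_ ?_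
  · intro i hi
    rw [Finset.mem_Icc] at hi ⊢
    have := h.inv.range (i := i) (by omega) (by omega)
    omega
  · intro i hi
    rw [Finset.mem_Icc] at hi ⊢
    have := h.range (i := i) (by omega) (by omega)
    omega
  · intro i _; exact apply_inv_cancel _ _
  · intro i _; exact inv_apply_cancel _ _
  · intro i _
    simp only [apply_inv_cancel]
    ring

lemma F_s_mul {r i : ℕ} (hi : 1 ≤ i) (hir : i < r) {w : G} (h : Sym r w) :
    F r (s i * w) = F r w + (w⁻¹ i - w⁻¹ (i + 1)) := by
  have h1 : (s i)⁻¹ = s i := inv_eq_of_mul_eq_one_left (s_mul_self hi)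
  rw [← F_inv ((sym_s hi hir).mul h), mul_inv_rev, h1, F_mul_s hi hir, F_inv h]

lemma exists_max_F {r : ℕ} (S : Set G) (hS : ∀ w ∈ S, Sym r w) (hne : S.Nonempty) :
    ∃ w ∈ S, ∀ w' ∈ S, F r w' ≤ F r w := by
  obtain ⟨_, ⟨w, hw, rfl⟩, hmax⟩ := Int.exists_greatest_of_bdd (P := fun z => ∃ w ∈ S, F r w = z)
    ⟨∑ i ∈ Finset.Icc (1 : ℤ) r, i * r, by
      rintro _ ⟨w, hw, rfl⟩
      refine Finset.sum_le_sum fun i hi => ?_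
      rw [Finset.mem_Icc] at hi
      exact mul_le_mul_of_nonneg_left ((hS w hw).range (by omega) (by omega)).2 (by omega)⟩
    (by obtain ⟨w, hw⟩ := hne; exact ⟨_, w, hw, rfl⟩)
  exact ⟨w, hw, fun w' hw' => hmax _ ⟨w', hw', rfl⟩⟩

lemma lt_of_max_left {r i : ℕ} (hi : 1 ≤ i) (hir : i < r) {w : G} (h : Sym r w)
    (hmax : F r (s i * w) ≤ F r w) : w⁻¹ i < w⁻¹ (i + 1) := by
  rw [F_s_mul hi hir h] at hmax
  refine lt_of_le_of_ne (by omega) fun h' => ?_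
  have := w⁻¹.injective h'
  omega

lemma lt_of_max_right {r i : ℕ} (hi : 1 ≤ i) (hir : i < r) {w : G}
    (hmax : F r (w * s i) ≤ F r w) : w i < w (i + 1) := by
  rw [F_mul_s hi hir] at hmax
  refine lt_of_le_of_ne (by omega) fun h' => ?_
  have := w.injective h'
  omega

/-- For `α_i = α_j·d` one has `d sᵢ d⁻¹ = s_j`. -/
lemma conj_s {r i j : ℕ} (hi : 1 ≤ i) (hj : 1 ≤ j) {d : G} (hd : Sym r d)
    (h1 : d i = j) (h2 : d (i + 1) = j + 1) : d * s i * d⁻¹ = s j := by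
  rw [mul_inv_eq_iff_eq_mul]
  ext k
  have h3 : d (-(i : ℤ)) = -j := by rw [hd.1.1, h1]
  have h4 : d (-((i : ℤ) + 1)) = -(j + 1) := by rw [hd.1.1, h2]
  simp only [Equiv.Perm.mul_apply]
  rw [s_apply hi, s_apply hj]
  have k1 : d k = j ↔ k = i := by rw [← h1, d.injective.eq_iff]
  have k2 : d k = j + 1 ↔ k = i + 1 := by rw [← h2, d.injective.eq_iff]
  have k3 : d k = -j ↔ k = -i := by rw [← h3, d.injective.eq_iff]
  have k4 : d k = -(j + 1) ↔ k = -(i + 1) := by rw [← h4, d.injective.eq_iff]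
  simp only [k1, k2, k3, k4]
  split_ifs <;> first | assumption | rfl

lemma conj_wpar {r a b : ℕ} {d : G} (hd : Sym r d) {k : G}
    (hk : k ∈ Wpar r ((rAct d '' Aset r b) ∩ Aset r a)) : d * k * d⁻¹ ∈ Wpar r (Aset r b) := by
  induction hk using Subgroup.closure_induction with
  | mem x hx =>
    obtain ⟨i, -, h2, rfl⟩ := hx
    obtain ⟨hi, j, hj, h3, h4⟩ := (mem_K_iff hd).1 h2
    rw [conj_s hi.1 hj.1 hd h3 h4]
    exact s_mem_wpar Aset_sub (sroot_mem_Aset.2 hj)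
  | one => simp
  | mul x y _ _ hx hy =>
    have : d * (x * y) * d⁻¹ = (d * x * d⁻¹) * (d * y * d⁻¹) := by group
    rw [this]; exact Subgroup.mul_mem _ hx hy
  | inv x _ hx =>
    have : d * x⁻¹ * d⁻¹ = (d * x * d⁻¹)⁻¹ := by group
    rw [this]; exact Subgroup.inv_mem _ hx

/-- The factorization `c = u d v⁻¹` with `d` a minimal `W_B`-`W_A` double coset representative
and `v⁻¹` a minimal representative of its left coset of `W_{B·d ∩ A}`. -/
lemma exists_factor {r a b : ℕ} {c : G} (hc : c ∈ Wpar r (DeltaS r)) :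
    ∃ d v u : G, c = u * d * v⁻¹ ∧ d ∈ DDm r (Aset r b) (Aset r a) (DeltaS r) ∧
      v ∈ Wpar r (Aset r a) ∧ v⁻¹ ∈ DD r ((rAct d '' Aset r b) ∩ Aset r a) ∧
      u ∈ Wpar r (Aset r b) := by
  have leA := wpar_mono (r := r) (Aset_sub (r := r) (a := a))
  have leB := wpar_mono (r := r) (Aset_sub (r := r) (a := b))
  obtain ⟨d, ⟨x, hx, y, hy, rfl⟩, hmax⟩ := exists_max_F (r := r)
    {w | ∃ x ∈ Wpar r (Aset r b), ∃ y ∈ Wpar r (Aset r a), w = x * c * y}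
    (by
      rintro _ ⟨x, hx, y, hy, rfl⟩
      exact sym_of_wpar (Subgroup.mul_mem _ (Subgroup.mul_mem _ (leB hx) hc) (leA hy)))
    ⟨c, 1, Subgroup.one_mem _, 1, Subgroup.one_mem _, by simp⟩
  have hdW : x * c * y ∈ Wpar r (DeltaS r) :=
    Subgroup.mul_mem _ (Subgroup.mul_mem _ (leB hx) hc) (leA hy)
  obtain ⟨d, hdef⟩ : ∃ d, d = x * c * y := ⟨_, rfl⟩
  rw [← hdef] at hdW hmax
  have hd : Sym r d := sym_of_wpar hdW
  have hK : (rAct d '' Aset r b) ∩ Aset r a ⊆ DeltaS r := fun _ h => Aset_sub h.2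
  have leK := wpar_mono (r := r) (M := (rAct d '' Aset r b) ∩ Aset r a) (N := Aset r a)
    Set.inter_subset_right
  obtain ⟨z, ⟨k, hk, rfl⟩, hzmax⟩ := exists_max_F (r := r)
    {w | ∃ k ∈ Wpar r ((rAct d '' Aset r b) ∩ Aset r a), w = k * y⁻¹}
    (by
      rintro _ ⟨k, hk, rfl⟩
      exact sym_of_wpar (leA (Subgroup.mul_mem _ (leK hk) (Subgroup.inv_mem _ hy))))
    ⟨y⁻¹, 1, Subgroup.one_mem _, by simp⟩
  have hzA : k * y⁻¹ ∈ Wpar r (Aset r a) :=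
    Subgroup.mul_mem _ (leK hk) (Subgroup.inv_mem _ hy)
  have hz := sym_of_wpar (leA hzA)
  refine ⟨d, (k * y⁻¹)⁻¹, x⁻¹ * (d * k * d⁻¹)⁻¹, ?_, ⟨⟨?_, ?_⟩, hdW⟩, Subgroup.inv_mem _ hzA,
    ?_, ?_⟩
  · rw [inv_inv, hdef]; group
  · rw [mem_DD_iff Aset_sub hd]
    intro i hi
    have h := sroot_mem_Aset.1 hi
    refine lt_of_max_left h.1 h.2.1 hd (hmax _ ⟨s i * x, ?_, y, hy, ?_⟩)
    · exact Subgroup.mul_mem _ (s_mem_wpar Aset_sub hi) hx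
    · rw [hdef]; group
  · rw [mem_DD_iff Aset_sub hd.inv, inv_inv]
    intro i hi
    have h := sroot_mem_Aset.1 hi
    refine lt_of_max_right h.1 h.2.1 (hmax _ ⟨x, hx, y * s i, ?_, ?_⟩)
    · exact Subgroup.mul_mem _ hy (s_mem_wpar Aset_sub hi)
    · rw [hdef]; group
  · rw [inv_inv, mem_DD_iff hK hz]
    intro i hi
    have h := sroot_mem_DeltaS.1 (hK hi)
    refine lt_of_max_left h.1 h.2 hz (hzmax _ ⟨s i * k, ?_, ?_⟩)
    · exact Subgroup.mul_mem _ (s_mem_wpar hK hi) hk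
    · group
  · exact Subgroup.mul_mem _ (Subgroup.inv_mem _ hx) (Subgroup.inv_mem _ (conj_wpar hd hk))

/-! ### Order-theoretic comparison of the conditions -/

/-- The ascents off `a`: `f` increases on the blocks `{1,…,a}` and `{a+1,…,r}`. -/
def BlockInc (r a : ℕ) (f : ℤ → ℤ) : Prop :=
  ∀ i : ℤ, 1 ≤ i → i < r → i ≠ a → f i < f (i + 1)

lemma lt_of_adj {f : ℤ → ℤ} {p q : ℤ} (hpq : p < q)
    (h : ∀ t, p ≤ t → t < q → f t < f (t + 1)) : f p < f q := by
  induction q, (show p + 1 ≤ q from hpq) using Int.leInduction with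
  | base => exact h p le_rfl (by omega)
  | succ n hn ih =>
    exact (ih (by omega) fun t h1 h2 => h t h1 (by omega)).trans (h n (by omega) (by omega))

lemma BlockInc.lt {r a : ℕ} {f : ℤ → ℤ} (h : BlockInc r a f) {p q : ℤ} (hp : 0 < p)
    (hpq : p < q) (hq : q ≤ r) (hb : p ≤ a ↔ q ≤ a) : f p < f q :=
  lt_of_adj hpq fun t h1 h2 => h t (by omega) (by omega) (by omega)

section compare

variable {r a b : ℕ} {d u v : G}

/-- If `p < q` lie in one `A`-block and `d p`, `d q` in one `B`-block, then `d` is a translation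
on `[p,q]`. -/
lemma interval_run (hd : Sym r d) (hdB : BlockInc r b ⇑d⁻¹) (hdA : BlockInc r a d)
    {p q : ℤ} (hp : 0 < p) (hq : q ≤ r) (hA : p ≤ a ↔ q ≤ a)
    (hB : d p ≤ b ↔ d q ≤ b) {t : ℤ} (h1 : p ≤ t) (h2 : t < q) :
    t ≠ a ∧ 0 < d t ∧ d t < r ∧ d t ≠ b ∧ d (t + 1) = d t + 1 := by
  have hpt : d p ≤ d t := by
    rcases eq_or_lt_of_le h1 with rfl | h
    · exact le_rfl
    · exact (hdA.lt hp h (by omega) (by omega)).le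
  have htt : d t < d (t + 1) := hdA t (by omega) (by omega) (by omega)
  have htq : d (t + 1) ≤ d q := by
    rcases eq_or_lt_of_le (show t + 1 ≤ q from h2) with h | h
    · rw [h]
    · exact (hdA.lt (by omega) h (by omega) (by omega)).le
  have r1 := hd.range (i := t) (by omega) (by omega)
  have r2 := hd.range (i := t + 1) (by omega) (by omega)
  refine ⟨by omega, r1.1, by omega, by omega, ?_⟩
  by_contra hne
  -- the preimage of `d t + 1` would lie strictly between `t` and `t + 1`
  have h3 := hdB.lt (p := d t) (q := d t + 1) (by omega) (by omega) (by omega) (by omega)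
  have h4 := hdB.lt (p := d t + 1) (q := d (t + 1)) (by omega) (by omega) (by omega) (by omega)
  simp only [inv_apply_cancel] at h3 h4
  omega

/-- The ascent condition expressing `v⁻¹ ∈ D_K` for `K = B·d ∩ A`. -/
def KInc (r a b : ℕ) (d v : G) : Prop :=
  ∀ t : ℤ, 0 < t → t < r → t ≠ a → 0 < d t → d t < r → d t ≠ b → d (t + 1) = d t + 1 →
    v t < v (t + 1)

lemma v_lt (hd : Sym r d) (hdB : BlockInc r b ⇑d⁻¹) (hdA : BlockInc r a d)
    (hK : KInc r a b d v) {p q : ℤ} (hp : 0 < p) (hpq : p < q) (hq : q ≤ r) (hA : p ≤ a ↔ q ≤ a)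
    (hB : d p ≤ b ↔ d q ≤ b) : v p < v q :=
  lt_of_adj hpq fun t h1 h2 => by
    obtain ⟨k1, k2, k3, k4, k5⟩ := interval_run hd hdB hdA hp hq hA hB h1 h2
    exact hK t (by omega) (by omega) k1 k2 k3 k4 k5

lemma vd_mono (hd : Sym r d) (hdB : BlockInc r b ⇑d⁻¹) (hdA : BlockInc r a d)
    (hK : KInc r a b d v) (hvA : ∀ i : ℤ, 0 < i → (v i ≤ a ↔ i ≤ a)) :
    BlockInc r b fun j => v (d⁻¹ j) := by
  intro j h1 h2 h3
  have r1 := hd.inv.range (i := j) (by omega) (by omega)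
  have r2 := hd.inv.range (i := j + 1) (by omega) (by omega)
  have hlt := hdB j h1 h2 h3
  have e1 := hvA _ r1.1
  have e2 := hvA _ r2.1
  by_cases hA : d⁻¹ j ≤ a ↔ d⁻¹ (j + 1) ≤ a
  · refine v_lt hd hdB hdA hK r1.1 hlt r2.2 hA ?_
    simp only [apply_inv_cancel]
    omega
  · show v (d⁻¹ j) < v (d⁻¹ (j + 1))
    omega

/-- For `α ∈ B`, the root `α·u` is positive exactly when `α·(u d v⁻¹)` is. -/
lemma left_iff (hd : Sym r d) (hdB : BlockInc r b ⇑d⁻¹) (hdA : BlockInc r a d)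
    (hK : KInc r a b d v) (hvA : ∀ i : ℤ, 0 < i → (v i ≤ a ↔ i ≤ a)) (hu : Sym r u)
    (huB : ∀ i : ℤ, 0 < i → (u i ≤ b ↔ i ≤ b)) {i : ℤ} (h1 : 1 ≤ i) (h2 : i < r) (h3 : i ≠ b) :
    u⁻¹ i < u⁻¹ (i + 1) ↔ v (d⁻¹ (u⁻¹ i)) < v (d⁻¹ (u⁻¹ (i + 1))) := by
  have hm := vd_mono hd hdB hdA hK hvA
  have r1 := hu.inv.range (i := i) (by omega) (by omega)
  have r2 := hu.inv.range (i := i + 1) (by omega) (by omega)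
  have e1 := huB _ r1.1
  have e2 := huB _ r2.1
  simp only [apply_inv_cancel] at e1 e2
  constructor
  · exact fun h => hm.lt r1.1 h r2.2 (by omega)
  · intro h
    by_contra hc
    rcases eq_or_lt_of_le (not_lt.1 hc) with h' | h'
    · have := u⁻¹.injective h'; omega
    · have := hm.lt r2.1 h' r1.2 (by omega)
      omega

/-- For a set `J` of indices of roots in `A`, the condition `(u d v⁻¹)⁻¹ ∈ D_J` is equivalent to
`v ∈ D_J` together with `u⁻¹ ∈ D_{B ∩ J v d⁻¹}`. -/
lemma right_iff (hd : Sym r d) (hdB : BlockInc r b ⇑d⁻¹) (hdA : BlockInc r a d)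
    (hK : KInc r a b d v) (hv : Sym r v) (hvA : ∀ i : ℤ, 0 < i → (v i ≤ a ↔ i ≤ a))
    (huB : ∀ i : ℤ, 0 < i → (u i ≤ b ↔ i ≤ b)) {J : Set ℕ}
    (hJ : ∀ i ∈ J, 1 ≤ i ∧ i < r ∧ i ≠ a) :
    ((∀ i : ℕ, i ∈ J → v⁻¹ i < v⁻¹ (i + 1)) ∧
      (∀ j : ℕ, (1 ≤ j ∧ j < r ∧ j ≠ b) ∧
        (∃ i : ℕ, i ∈ J ∧ d (v⁻¹ i) = j ∧ d (v⁻¹ (i + 1)) = j + 1) → u j < u (j + 1))) ↔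
    ∀ i : ℕ, i ∈ J → u (d (v⁻¹ i)) < u (d (v⁻¹ (i + 1))) := by
  have facts : ∀ i : ℕ, i ∈ J → (0 < v⁻¹ i ∧ v⁻¹ i ≤ r) ∧ (0 < v⁻¹ (i + 1) ∧ v⁻¹ (i + 1) ≤ r) ∧
      (v⁻¹ i ≤ a ↔ v⁻¹ (i + 1) ≤ a) ∧ v⁻¹ i ≠ v⁻¹ (i + 1) := by
    intro i hi
    have h := hJ i hi
    have r1 := hv.inv.range (i := i) (by omega) (by omega)
    have r2 := hv.inv.range (i := i + 1) (by omega) (by omega)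
    have e1 := hvA _ r1.1
    have e2 := hvA _ r2.1
    simp only [apply_inv_cancel] at e1 e2
    exact ⟨r1, r2, by omega, fun h => by have := v⁻¹.injective h; omega⟩
  constructor
  · rintro ⟨hvJ, huK⟩ i hi
    obtain ⟨r1, r2, hA, -⟩ := facts i hi
    have hlt := hvJ i hi
    have hdlt := hdA.lt r1.1 hlt r2.2 hA
    have q1 := hd.range r1.1 r1.2
    have q2 := hd.range r2.1 r2.2
    by_cases hB : d (v⁻¹ i) ≤ b ↔ d (v⁻¹ (i + 1)) ≤ b
    · -- `v` increases on the interval and takes consecutive values at its ends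
      have hq : v⁻¹ (i + 1) = v⁻¹ i + 1 := by
        by_contra hne
        obtain ⟨k1, k2, k3, k4, k5⟩ := interval_run hd hdB hdA r1.1 r2.2 hA hB le_rfl hlt
        have m1 := hK _ r1.1 (by omega) k1 k2 k3 k4 k5
        have m2 := v_lt hd hdB hdA hK (p := v⁻¹ i + 1) (q := v⁻¹ (i + 1)) (by omega) (by omega)
          r2.2 (by omega) (by omega)
        simp only [apply_inv_cancel] at m1 m2
        omega
      obtain ⟨k1, k2, k3, k4, k5⟩ := interval_run hd hdB hdA r1.1 r2.2 hA hB le_rfl hlt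
      have := huK (d (v⁻¹ i)).toNat ⟨by omega, i, hi, by omega, by rw [hq, k5]; omega⟩
      rw [Int.toNat_of_nonneg k2.le] at this
      rw [hq, k5]
      exact this
    · have e1 := huB _ q1.1
      have e2 := huB _ q2.1
      omega
  · intro hc
    refine ⟨fun i hi => ?_, ?_⟩
    · obtain ⟨r1, r2, hA, hne⟩ := facts i hi
      by_contra hcon
      have hlt : v⁻¹ (i + 1 : ℤ) < v⁻¹ i := by omega
      have hdlt := hdA.lt r2.1 hlt r1.2 hA.symm
      have q1 := hd.range r1.1 r1.2
      have q2 := hd.range r2.1 r2.2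
      have hci := hc i hi
      by_cases hB : d (v⁻¹ (i + 1)) ≤ b ↔ d (v⁻¹ i) ≤ b
      · have := v_lt hd hdB hdA hK r2.1 hlt r1.2 hA.symm hB
        simp only [apply_inv_cancel] at this
        omega
      · have e1 := huB _ q1.1
        have e2 := huB _ q2.1
        omega
    · rintro j ⟨-, i, hi, h1, h2⟩
      have := hc i hi
      rwa [h1, h2] at this

end compare

/-! ### Assembly -/

lemma blockInc_of {r a : ℕ} {f : ℤ → ℤ}
    (h : ∀ i : ℕ, sroot i ∈ Aset r a → f i < f (i + 1)) : BlockInc r a f := by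
  intro i h1 h2 h3
  have := h i.toNat (sroot_mem_Aset.2 (by omega))
  rwa [Int.toNat_of_nonneg (by omega)] at this

lemma Jset_sub {r a : ℕ} {l1 l2 : List ℕ} (hla : l1.sum = a) (hlr : l1.sum + l2.sum = r) :
    Jset l1 l2 ⊆ Aset r a := by
  rintro x (⟨j, h1, h2, -, rfl⟩ | ⟨j, h1, h2, -, rfl⟩) <;>
  exact sroot_mem_Aset.2 (by omega)

/-- For a factorization `c = u d v⁻¹` as in `exists_factor`, `c ∈ D_{I,J}` amounts to the
conditions on `u` and `v` in the definition of admissibility. -/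
lemma mem_DDd_iff {r a b : ℕ} {I J : Set (ℤ → ℚ)} (hJ : J ⊆ Aset r a) (hI : I ⊆ Aset r b)
    {d u v : G} (hdm : d ∈ DDm r (Aset r b) (Aset r a) (DeltaS r))
    (hv : v ∈ Wpar r (Aset r a)) (hvK : v⁻¹ ∈ DD r ((rAct d '' Aset r b) ∩ Aset r a))
    (hu : u ∈ Wpar r (Aset r b)) :
    u * d * v⁻¹ ∈ DDd r I J ↔ u ∈ DD r I ∧ v ∈ DD r J ∧
      u⁻¹ ∈ DD r (Aset r b ∩ (rAct d⁻¹ '' (rAct v '' J))) := by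
  obtain ⟨⟨hdB, hdA⟩, hdW⟩ := hdm
  have sd := sym_of_wpar hdW
  have sv := sym_of_wpar (wpar_mono Aset_sub hv)
  have su := sym_of_wpar (wpar_mono Aset_sub hu)
  have sc : Sym r (u * d * v⁻¹) := (su.mul sd).mul sv.inv
  have hK : (rAct d '' Aset r b) ∩ Aset r a ⊆ DeltaS r := fun _ h => Aset_sub h.2
  have hK2 : Aset r b ∩ (rAct d⁻¹ '' (rAct v '' J)) ⊆ DeltaS r := fun _ h => Aset_sub h.1
  rw [mem_DD_iff Aset_sub sd] at hdB
  rw [mem_DD_iff Aset_sub sd.inv, inv_inv] at hdA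
  rw [mem_DD_iff hK sv.inv, inv_inv] at hvK
  have bB : BlockInc r b ⇑d⁻¹ := blockInc_of hdB
  have bA : BlockInc r a d := blockInc_of hdA
  have hKI : KInc r a b d v := by
    intro t t1 t2 t3 t4 t5 t6 t7
    have := hvK t.toNat ((mem_K_iff sd).2 ⟨by omega, (d t).toNat, by omega, by
      rw [Int.toNat_of_nonneg t1.le, Int.toNat_of_nonneg t4.le], by
      rw [Int.toNat_of_nonneg t1.le, Int.toNat_of_nonneg t4.le, t7]⟩)
    rwa [Int.toNat_of_nonneg t1.le] at this
  have hvA := wpar_le hv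
  have huB := wpar_le hu
  have hR := right_iff sd bB bA hKI sv hvA huB (J := {i | sroot i ∈ J})
    fun i hi => sroot_mem_Aset.1 (hJ hi)
  have c1 : ∀ x, (u * d * v⁻¹)⁻¹ x = v (d⁻¹ (u⁻¹ x)) := fun x => by
    simp only [mul_inv_rev, inv_inv]; rfl
  have hL : u * d * v⁻¹ ∈ DD r I ↔ u ∈ DD r I := by
    rw [mem_DD_iff (hI.trans Aset_sub) sc, mem_DD_iff (hI.trans Aset_sub) su]
    refine forall₂_congr fun i hi => ?_
    have h := sroot_mem_Aset.1 (hI hi)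
    rw [c1, c1]
    exact (left_iff sd bB bA hKI hvA su huB (by omega) (by omega) (by omega)).symm
  have hR' : (u * d * v⁻¹)⁻¹ ∈ DD r J ↔ v ∈ DD r J ∧
      u⁻¹ ∈ DD r (Aset r b ∩ (rAct d⁻¹ '' (rAct v '' J))) := by
    rw [mem_DD_iff (hJ.trans Aset_sub) sc.inv, mem_DD_iff (hJ.trans Aset_sub) sv,
      mem_DD_iff hK2 su.inv, inv_inv, inv_inv]
    simp only [mem_K2_iff hJ sd sv]
    exact hR.symm
  exact and_congr hL hR'

/-- `D^Δ_{I,J} = {udv⁻¹ : (d,v,u) an admissible triple for `(λ,μ)`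
with `d ∈ D^Δ_{B,A}`}`. -/
theorem DDelta_eq_admissible (n r a b : ℕ) (l1 l2 m1 m2 : List ℕ)
    (hla : l1.sum = a) (hlr : l1.sum + l2.sum = r) (hln : l1.length + l2.length = n)
    (hmb : m1.sum = b) (hmr : m1.sum + m2.sum = r) (hmn : m1.length + m2.length = n) :
    DDm r (Jset m1 m2) (Jset l1 l2) (DeltaS r) =
      {c : G | ∃ d v u : G, Admissible r a b l1 l2 m1 m2 d v u ∧
        d ∈ DDm r (Aset r b) (Aset r a) (DeltaS r) ∧ c = u * d * v⁻¹} := by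
  have hJ := Jset_sub hla hlr
  have hI := Jset_sub hmb hmr
  ext c
  constructor
  · rintro ⟨hc, hcW⟩
    obtain ⟨d, v, u, rfl, hd, hv, hvK, hu⟩ := exists_factor (a := a) (b := b) hcW
    obtain ⟨h1, h2, h3⟩ := (mem_DDd_iff hJ hI hd hv hvK hu).1 hc
    have sd := sym_of_wpar hd.2
    exact ⟨d, v, u, ⟨⟨mem_DD_Atil sd hd.1.1, mem_DD_Atil sd.inv hd.1.2⟩,
      ⟨⟨h2, hvK⟩, hv⟩, ⟨⟨h1, h3⟩, hu⟩⟩, hd, rfl⟩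
  · rintro ⟨d, v, u, ⟨-, ⟨⟨h2, hvK⟩, hv⟩, ⟨⟨h1, h3⟩, hu⟩⟩, hd, rfl⟩
    refine ⟨(mem_DDd_iff hJ hI hd hv hvK hu).2 ⟨h1, h2, h3⟩, ?_⟩
    exact Subgroup.mul_mem _ (Subgroup.mul_mem _ (wpar_mono Aset_sub hu) hd.2)
      (Subgroup.inv_mem _ (wpar_mono Aset_sub hv))

end QQS
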